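/- Let G = (V, E) be a directed graph on a finite vertex set V with |V| = K, and let π : V → ℝ be a probability distribution on V such that π(i) ≥ ε for every i ∈ V, for some constant 0 < ε < 1/2. Then Σ_{i∈V} π(i) / (π(i) + Σ_{j : (j→i)∈E} π(j)) ≤ 4·α(G)·log(4K / (α(G)·ε)), where α(G) is the independence number of G. -/

import Mathlib

open Finset

/-- `s` is an independent set of the directed graph with edge relation `E`:
for all distinct `i, j ∈ s`, neither `i → j` nor `j → i` is an edge. -/
def DirIsIndepSet {V : Type*} (E : V → V → Prop) (s : Finset V) : Prop :=
  ∀ i ∈ s, ∀ j ∈ s, i ≠ j → ¬ E i j ∧ ¬ E j i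

/-- The independence number of a directed graph: the maximum cardinality of an
independent set. -/
noncomputable def dirIndepNum (V : Type*) [Fintype V] (E : V → V → Prop) : ℕ :=
  sSup {n | ∃ s : Finset V, DirIsIndepSet E s ∧ s.card = n}

lemma indep_card_le {V : Type*} [Fintype V] (E : V → V → Prop) (s : Finset V)
    (hs : DirIsIndepSet E s) : s.card ≤ dirIndepNum V E := by
  apply le_csSup
  · refine ⟨Fintype.card V, ?_⟩
    rintro n ⟨t, _, rfl⟩
    exact card_le_univ t
  · exact ⟨s, hs, rfl⟩

lemma dirIndepNum_le {V : Type*} [Fintype V] (E : V → V → Prop) :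
    dirIndepNum V E ≤ Fintype.card V := by
  apply csSup_le
  · exact ⟨0, ∅, by simp [DirIsIndepSet], rfl⟩
  · rintro n ⟨t, _, rfl⟩
    exact card_le_univ t

open Classical in
lemma greedy {V : Type*} (E : V → V → Prop) (w : V → ℝ) (hw : ∀ i, 0 < w i) (n : ℕ) :
    ∀ S : Finset V, S.card ≤ n → ∃ T ⊆ S, DirIsIndepSet E T ∧
      ∑ i ∈ S, w i / (∑ j ∈ S.filter (fun j => j = i ∨ E i j ∨ E j i), w j) ≤ T.card := by
  induction n with
  | zero =>
    intro S hS
    have : S = ∅ := by simpa using hS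
    subst this
    exact ⟨∅, by simp, by simp [DirIsIndepSet], by simp⟩
  | succ n ih =>
    intro S hS
    rcases S.eq_empty_or_nonempty with rfl | hne
    · exact ⟨∅, by simp, by simp [DirIsIndepSet], by simp⟩
    set D : V → ℝ := fun i => ∑ j ∈ S.filter (fun j => j = i ∨ E i j ∨ E j i), w j with hD
    obtain ⟨i, hi, hmin⟩ := exists_min_image S D hne
    set N := S.filter (fun j => j = i ∨ E i j ∨ E j i) with hN
    have hiN : i ∈ N := by simp [hN, hi]
    have hDpos : 0 < D i := sum_pos (fun j _ => hw j) ⟨i, hiN⟩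
    have hNS : N ⊆ S := filter_subset _ _
    have hlt : (S \ N).card < S.card := by
      apply card_lt_card
      refine ⟨sdiff_subset, fun h => ?_⟩
      have := h hi
      simp [hiN] at this
    obtain ⟨T, hTS, hT, hTc⟩ := ih (S \ N) (by omega)
    have hiT : i ∉ T := fun h => by
      have := hTS h
      simp [hiN] at this
    have hnon : ∀ j ∈ T, ¬ E i j ∧ ¬ E j i := by
      intro j hj
      have := hTS hj
      simp only [mem_sdiff, hN, mem_filter] at this
      tauto
    refine ⟨insert i T, ?_, ?_, ?_⟩
    · exact insert_subset hi (hTS.trans sdiff_subset)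
    · intro a ha b hb hab
      rcases mem_insert.1 ha with rfl | ha'
      · rcases mem_insert.1 hb with rfl | hb'
        · exact absurd rfl hab
        · exact hnon b hb'
      · rcases mem_insert.1 hb with rfl | hb'
        · exact (hnon a ha').symm
        · exact hT a ha' b hb' hab
    · rw [card_insert_of_notMem hiT, ← sum_sdiff hNS]
      push_cast
      apply add_le_add
      · refine le_trans (sum_le_sum ?_) hTc
        intro k hk
        apply div_le_div_of_nonneg_left (hw k).le
        · exact sum_pos (fun j _ => hw j) ⟨k, by simpa using hk⟩
        · exact sum_le_sum_of_subset_of_nonneg (filter_subset_filter _ sdiff_subset)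
            (fun j _ _ => (hw j).le)
      · calc ∑ k ∈ N, w k / D k ≤ ∑ k ∈ N, w k / D i := by
              apply sum_le_sum
              intro k hk
              exact div_le_div_of_nonneg_left (hw k).le hDpos (hmin k (hNS hk))
          _ = 1 := by
              rw [← sum_div]
              exact div_self hDpos.ne'

open Classical in
lemma exists_heavy {V : Type*} [Fintype V] (E : V → V → Prop) (w : V → ℝ) (hw : ∀ i, 0 < w i)
    (S : Finset V) (hS : S.Nonempty) :
    ∃ i ∈ S, ∑ j ∈ S, w j ≤
      2 * (dirIndepNum V E : ℝ) * (w i + ∑ j ∈ S.filter (fun j => E j i), w j) := by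
  by_contra! hcon
  obtain ⟨T, -, hT, hTc⟩ := greedy E w hw _ S le_rfl
  have hTa : (T.card : ℝ) ≤ dirIndepNum V E := by exact_mod_cast indep_card_le E T hT
  set D : V → ℝ := fun i => ∑ j ∈ S.filter (fun j => j = i ∨ E i j ∨ E j i), w j with hD
  set W := ∑ j ∈ S, w j with hW
  set a : ℝ := (dirIndepNum V E : ℝ) with hadef
  have hWpos : 0 < W := sum_pos (fun j _ => hw j) hS
  have hDpos : ∀ i ∈ S, 0 < D i := fun i hi => sum_pos (fun j _ => hw j) ⟨i, by simpa using hi⟩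
  have hcs : W ^ 2 ≤ (∑ i ∈ S, w i / D i) * ∑ i ∈ S, w i * D i := by
    apply sum_sq_le_sum_mul_sum_of_sq_le_mul
    · intro i hi; exact div_nonneg (hw i).le (hDpos i hi).le
    · intro i hi; exact mul_nonneg (hw i).le (hDpos i hi).le
    · intro i hi
      have := (hDpos i hi).ne'
      apply le_of_eq
      field_simp
  have hDle : ∀ i ∈ S, D i ≤ w i + (∑ j ∈ S, if E i j then w j else 0)
      + ∑ j ∈ S, if E j i then w j else 0 := by
    intro i hi
    have : w i = ∑ j ∈ S, if j = i then w j else 0 := by simp [hi]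
    rw [this, ← sum_add_distrib, ← sum_add_distrib]
    simp only [hD]
    rw [sum_filter]
    apply sum_le_sum
    intro j _
    have := hw j
    split_ifs <;> first | linarith | tauto
  have hsym : ∑ i ∈ S, w i * (∑ j ∈ S, if E i j then w j else 0)
      = ∑ i ∈ S, w i * (∑ j ∈ S, if E j i then w j else 0) := by
    simp only [mul_sum]
    rw [sum_comm]
    apply sum_congr rfl; intro i _
    apply sum_congr rfl; intro j _
    split_ifs <;> ring
  have h1 : ∑ i ∈ S, w i * D i ≤
      ∑ i ∈ S, w i * (2 * (w i + ∑ j ∈ S.filter (fun j => E j i), w j)) := by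
    calc _ ≤ ∑ i ∈ S, w i * (w i + (∑ j ∈ S, if E i j then w j else 0)
      + ∑ j ∈ S, if E j i then w j else 0) :=
          sum_le_sum fun i hi => mul_le_mul_of_nonneg_left (hDle i hi) (hw i).le
      _ ≤ ∑ i ∈ S, w i * (w i + (∑ j ∈ S, if E j i then w j else 0)
      + ∑ j ∈ S, if E j i then w j else 0) := by
          simp only [mul_add, sum_add_distrib, hsym]; exact le_rfl
      _ ≤ _ := by
          apply sum_le_sum; intro i _
          rw [sum_filter]
          apply mul_le_mul_of_nonneg_left _ (hw i).le
          have := hw i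
          linarith
  have h2 : a * ∑ i ∈ S, w i * (2 * (w i + ∑ j ∈ S.filter (fun j => E j i), w j)) < W * W := by
    rw [mul_sum]
    conv_rhs => rw [hW, sum_mul]
    apply sum_lt_sum_of_nonempty hS
    intro i hi
    have := mul_lt_mul_of_pos_left (hcon i hi) (hw i)
    linarith
  have h0 : 0 ≤ ∑ i ∈ S, w i * D i := sum_nonneg fun i hi => mul_nonneg (hw i).le (hDpos i hi).le
  have h3 := mul_le_mul_of_nonneg_right (hTc.trans hTa) h0
  have ha : (0 : ℝ) ≤ a := Nat.cast_nonneg _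
  have h4 := mul_le_mul_of_nonneg_left h1 ha
  nlinarith

open Classical in
lemma main_ind {V : Type*} [Fintype V] (E : V → V → Prop) (w : V → ℝ) (ε : ℝ) (hε : 0 < ε)
    (hw : ∀ i, ε ≤ w i) (ha : 0 < dirIndepNum V E) (n : ℕ) :
    ∀ S : Finset V, S.card = dirIndepNum V E + n →
      ∑ i ∈ S, w i / (w i + ∑ j ∈ S.filter (fun j => E j i), w j) ≤
        2 * (dirIndepNum V E : ℝ) * Real.log ((∑ i ∈ S, w i) / ((dirIndepNum V E : ℝ) * ε))
          + dirIndepNum V E := by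
  have hw0 : ∀ i, 0 < w i := fun i => hε.trans_le (hw i)
  have ha' : (0 : ℝ) < dirIndepNum V E := by exact_mod_cast ha
  have hin : ∀ (S : Finset V) i, 0 ≤ ∑ j ∈ S.filter (fun j => E j i), w j :=
    fun S i => sum_nonneg fun j _ => (hw0 j).le
  induction n with
  | zero =>
    intro S hS
    have h1 : ∑ i ∈ S, w i / (w i + ∑ j ∈ S.filter (fun j => E j i), w j) ≤ ∑ i ∈ S, (1 : ℝ) := by
      apply sum_le_sum
      intro i _
      rw [div_le_one (by linarith [hw0 i, hin S i])]
      linarith [hin S i]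
    have h2 : (dirIndepNum V E : ℝ) * ε ≤ ∑ i ∈ S, w i := by
      have := card_nsmul_le_sum S w ε (fun i _ => hw i)
      rw [hS] at this
      simpa using this
    have h3 : 0 ≤ Real.log ((∑ i ∈ S, w i) / ((dirIndepNum V E : ℝ) * ε)) := by
      apply Real.log_nonneg
      rw [le_div_iff₀ (by positivity)]
      linarith
    have h4 : ∑ i ∈ S, (1 : ℝ) = dirIndepNum V E := by simp [hS]
    have := mul_nonneg (mul_nonneg zero_le_two ha'.le) h3
    linarith
  | succ n ih =>
    intro S hS
    have hne : S.Nonempty := card_pos.1 (by omega)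
    obtain ⟨i, hi, hheavy⟩ := exists_heavy E w hw0 S hne
    have hc : (S.erase i).card = dirIndepNum V E + n := by
      rw [card_erase_of_mem hi]; omega
    have ih' := ih _ hc
    have hne' : (S.erase i).Nonempty := card_pos.1 (by omega)
    rw [← add_sum_erase S _ hi]
    have hWe := add_sum_erase S w hi
    set W := ∑ j ∈ S, w j with hW
    set W' := ∑ j ∈ S.erase i, w j with hW'
    set a : ℝ := (dirIndepNum V E : ℝ) with hadef
    have hW'pos : 0 < W' := sum_pos (fun j _ => hw0 j) hne'
    have hWpos : 0 < W := by linarith [hw0 i]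
    have hterm : w i / (w i + ∑ j ∈ S.filter (fun j => E j i), w j) ≤ 2 * a * (w i / W) := by
      rw [← mul_div_assoc, div_le_div_iff₀ (by linarith [hw0 i, hin S i]) hWpos]
      have := mul_le_mul_of_nonneg_left hheavy (hw0 i).le
      linarith
    have hlog : w i / W ≤ Real.log (W / (a * ε)) - Real.log (W' / (a * ε)) := by
      rw [Real.log_div hWpos.ne' (by positivity), Real.log_div hW'pos.ne' (by positivity)]
      have := Real.log_le_sub_one_of_pos (div_pos hW'pos hWpos)
      rw [Real.log_div hW'pos.ne' hWpos.ne'] at this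
      have h5 : W' / W = 1 - w i / W := by
        field_simp
        linarith
      linarith
    have hrest : ∑ k ∈ S.erase i, w k / (w k + ∑ j ∈ S.filter (fun j => E j k), w j) ≤
        ∑ k ∈ S.erase i, w k / (w k + ∑ j ∈ (S.erase i).filter (fun j => E j k), w j) := by
      apply sum_le_sum
      intro k _
      apply div_le_div_of_nonneg_left (hw0 k).le
      · linarith [hw0 k, hin (S.erase i) k]
      · gcongr
        · exact fun j _ _ => (hw0 j).le
        · exact erase_subset _ _
    have := mul_le_mul_of_nonneg_left hlog (mul_nonneg zero_le_two ha'.le)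
    linarith

theorem stmt1 {V : Type*} [Fintype V] (E : V → V → Prop) [DecidableRel E]
    (K : ℕ) (hK : Fintype.card V = K)
    (π : V → ℝ) (hnn : ∀ i, 0 ≤ π i) (hsum : ∑ i, π i = 1)
    (ε : ℝ) (hε0 : 0 < ε) (hε1 : ε < 1 / 2) (hπε : ∀ i, ε ≤ π i) :
    ∑ i, π i / (π i + ∑ j ∈ univ.filter (fun j => E j i), π j)
      ≤ 4 * (dirIndepNum V E : ℝ) *
          Real.log (4 * K / ((dirIndepNum V E : ℝ) * ε)) := by
  have hV : Nonempty V := by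
    by_contra h
    rw [not_nonempty_iff] at h
    simp at hsum
  obtain ⟨v⟩ := hV
  have ha : 0 < dirIndepNum V E := by
    have := indep_card_le E {v} (by simp [DirIsIndepSet])
    rw [card_singleton] at this
    omega
  have hle := dirIndepNum_le E
  obtain ⟨n, hn⟩ := Nat.exists_eq_add_of_le hle
  have hmain := main_ind E π ε hε0 hπε ha n univ (by rw [card_univ, hn])
  rw [hsum] at hmain
  rw [hK] at hle
  have ha' : (1 : ℝ) ≤ dirIndepNum V E := by exact_mod_cast ha
  have hle' : (dirIndepNum V E : ℝ) ≤ K := by exact_mod_cast hle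
  have hKpos : (0 : ℝ) < K := by linarith
  have hpos : 0 < (dirIndepNum V E : ℝ) * ε := by positivity
  have hL1 : Real.log (1 / ((dirIndepNum V E : ℝ) * ε)) ≤
      Real.log (4 * K / ((dirIndepNum V E : ℝ) * ε)) := by
    apply Real.log_le_log (by positivity)
    gcongr
    linarith
  have hL2 : 1 ≤ Real.log (4 * K / ((dirIndepNum V E : ℝ) * ε)) := by
    rw [Real.le_log_iff_exp_le (by positivity)]
    have := Real.exp_one_lt_d9
    rw [le_div_iff₀ hpos]
    have h6 : (dirIndepNum V E : ℝ) * ε ≤ K * 1 :=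
      mul_le_mul hle' (by linarith) hε0.le (by linarith)
    nlinarith
  have h7 := mul_le_mul_of_nonneg_left hL1 (by linarith : (0 : ℝ) ≤ 2 * dirIndepNum V E)
  have h8 := mul_le_mul_of_nonneg_left hL2 (by linarith : (0 : ℝ) ≤ dirIndepNum V E)
  have h9 : ∑ i, π i / (π i + ∑ j ∈ univ.filter (fun j => E j i), π j) ≤
      2 * (dirIndepNum V E : ℝ) * Real.log (1 / ((dirIndepNum V E : ℝ) * ε))
          + dirIndepNum V E := by
    convert hmain
  linarith
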